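/- arXiv:1411.6963 — 2 statements merged into one kernel-verified Lean document; each statement's English description precedes it below -/
import Mathlib

section
/- For a positive integer b, the quadratic form f^{1,b}_1(x,y,z,w) = x² + b·y² + (z² + z·w + w²) represents every nonnegative integer (with x, y, z, w ∈ ℤ) if and only if b ∈ {1, 2, 3, 4, 5, 6}. -/
/-!
Write `T = x² + z² + zw + w²`. Since `T` does not represent `6`, universality forces `b ≤ 6`.

Conversely, it is enough to know that `T` represents every `n` prime to `3` and every `n = 3m` with
`m ≡ 1 (mod 3)` (`repT_of_not_three_dvd`, `repT_three_mul`): for each `b ≤ 6`, subtracting `b·y²`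
with `y ∈ {0, 1, 2}`, or dividing by `9`, brings any `n` to one of these cases, up to a few small
values of `n`.

The two facts on `T` follow the pattern of Dirichlet's proof of the three-square theorem.

* A positive definite integral ternary form of half-discriminant `3` is equivalent to `T`
  (`Good.repT`): reduction theory leaves only four reduced forms, all visibly equivalent to `T`.
* It remains to construct such a form with `n` as a coefficient. The form
  `p x² + 2u xy + β y² + r yz + n z²` with `d = pβ - u²` has half-discriminant `4nd - pr²`, so one
  needs `4nd = pr² + 3` and `-d` a square modulo `p`. Dirichlet's theorem on primes in arithmetic
  progressions supplies a prime `p` with `d ≡ 1 (mod 12)` and `r = 1` (if `3 ∤ n`) or `r = 3`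
  (if `n = 3m`). Quadratic reciprocity then gives
  `(-d/p) = (d/p) = (p/d) = (pr²/d) = (-3/d) = 1` (`exists_sq_add`).
-/

/-- `n` is represented by the ternary form `T = x² + (z² + zw + w²)`. -/
def RepT (n : ℤ) : Prop := ∃ x z w : ℤ, n = x ^ 2 + (z ^ 2 + z * w + w ^ 2)

/-! ### Reduction of ternary forms of half-discriminant 3 -/

/-- The integral ternary form `a x² + b y² + c z² + r yz + s xz + t xy` is positive definite, has
half-discriminant `3` (half the determinant of its Hessian matrix), and represents `n`. Positive
definiteness is encoded by the positivity of the leading minors. -/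
structure Good (n a b c r s t : ℤ) : Prop where
  a_pos : 0 < a
  minor_pos : 0 < 4 * a * b - t ^ 2
  disc : 4 * a * b * c + r * s * t - a * r ^ 2 - b * s ^ 2 - c * t ^ 2 = 3
  rep : ∃ x y z : ℤ, n = a * x ^ 2 + b * y ^ 2 + c * z ^ 2 + r * y * z + s * x * z + t * x * y

/-- A residue class modulo `2m` has a representative of absolute value at most `m`. -/
theorem exists_centered (t : ℤ) {m : ℤ} (hm : 0 < m) :
    ∃ k : ℤ, -m ≤ t + 2 * m * k ∧ t + 2 * m * k ≤ m := by
  refine ⟨-((t + m) / (2 * m)), ?_⟩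
  have h1 := Int.emod_add_mul_ediv (t + m) (2 * m)
  have h2 := Int.emod_nonneg (t + m) (b := 2 * m) (by omega)
  have h3 := Int.emod_lt_of_pos (t + m) (b := 2 * m) (by omega)
  constructor <;> nlinarith

namespace Good
variable {n a b c r s t : ℤ}

theorem shear_xy (h : Good n a b c r s t) (k : ℤ) :
    Good n a (b + t * k + a * k ^ 2) c (r + s * k) s (t + 2 * a * k) := by
  obtain ⟨h1, h2, h3, x, y, z, h4⟩ := h
  refine ⟨h1, ?_, ?_, x - k * y, y, z, ?_⟩
  · linarith
  · linarith
  · rw [h4]; ring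

theorem shear_xz (h : Good n a b c r s t) (k : ℤ) :
    Good n a b (c + s * k + a * k ^ 2) (r + t * k) (s + 2 * a * k) t := by
  obtain ⟨h1, h2, h3, x, y, z, h4⟩ := h
  refine ⟨h1, h2, ?_, x - k * z, y, z, ?_⟩
  · linarith
  · rw [h4]; ring

theorem shear_yz (h : Good n a b c r s t) (k : ℤ) :
    Good n a b (c + r * k + b * k ^ 2) (r + 2 * b * k) (s + t * k) t := by
  obtain ⟨h1, h2, h3, x, y, z, h4⟩ := h
  refine ⟨h1, h2, ?_, x, y - k * z, z, ?_⟩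
  · linarith
  · rw [h4]; ring

theorem b_pos (h : Good n a b c r s t) : 0 < b := by
  have := h.a_pos
  have := h.minor_pos
  by_contra hb
  nlinarith [sq_nonneg t]

/-- The form `F` satisfies `4aF = (2ax + ty + sz)² + (A y² + 2B yz + C z²)` with
`A = 4ab - t²`, `B = 2ar - st` and `C = 4ac - s²`; this is the discriminant of the binary part. -/
theorem minors (h : Good n a b c r s t) :
    (4 * a * b - t ^ 2) * (4 * a * c - s ^ 2) - (2 * a * r - s * t) ^ 2 = 12 * a := by
  linear_combination 4 * a * h.disc

theorem swap_xy (h : Good n a b c r s t) : Good n b a c s r t := by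
  have hb := h.b_pos
  obtain ⟨h1, h2, h3, x, y, z, h4⟩ := h
  exact ⟨hb, by linarith, by linarith, y, x, z, by rw [h4]; ring⟩

theorem swap_yz (h : Good n a b c r s t) : Good n a c b r t s := by
  have hm := h.minors
  obtain ⟨h1, h2, h3, x, y, z, h4⟩ := h
  refine ⟨h1, ?_, by linarith, x, z, y, by rw [h4]; ring⟩
  by_contra hc
  nlinarith [sq_nonneg (2 * a * r - s * t)]

/-- The reduced case. Reducedness of the binary part gives `A² ≤ 16a`, while `a ≤ b` and `|t| ≤ a`
give `3a² ≤ A`. Together these force `a = 1` and `A ≤ 4`, which leaves four forms. -/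
theorem repT_of_reduced (h : Good n a b c r s t)
    (hab : a ≤ b) (hAC : 4 * a * b - t ^ 2 ≤ 4 * a * c - s ^ 2)
    (ht : -a ≤ t ∧ t ≤ a) (hs : -a ≤ s ∧ s ≤ a)
    (hB : -(4 * a * b - t ^ 2) ≤ 2 * (2 * a * r - s * t) ∧
      2 * (2 * a * r - s * t) ≤ 4 * a * b - t ^ 2) : RepT n := by
  have hm := h.minors
  obtain ⟨ha, hA, hD, x, y, z, hn⟩ := h
  obtain ⟨A, hAdef⟩ : ∃ A, A = 4 * a * b - t ^ 2 := ⟨_, rfl⟩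
  obtain ⟨B, hBdef⟩ : ∃ B, B = 2 * a * r - s * t := ⟨_, rfl⟩
  obtain ⟨C, hCdef⟩ : ∃ C, C = 4 * a * c - s ^ 2 := ⟨_, rfl⟩
  rw [← hAdef, ← hBdef] at hB
  rw [← hAdef, ← hCdef] at hAC
  rw [← hAdef] at hA
  rw [← hAdef, ← hBdef, ← hCdef] at hm
  have hA16 : A ^ 2 ≤ 16 * a := by nlinarith
  have h3a : 3 * a ^ 2 ≤ A := by nlinarith
  have ha1 : a = 1 := by
    by_contra hne
    have h2 : 2 ≤ a := by omega
    have h6 : 6 * a ≤ A := by nlinarith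
    nlinarith
  subst ha1
  have hA4 : A ≤ 4 := by nlinarith
  obtain ⟨ht1, ht2⟩ := ht
  obtain ⟨hs1, hs2⟩ := hs
  obtain ⟨hB1, hB2⟩ := hB
  have hBl : -2 ≤ B := by omega
  have hBu : B ≤ 2 := by omega
  have key : (t = 0 ∧ s = 0 ∧ b = 1 ∧ c = 1 ∧ (r = 1 ∨ r = -1)) ∨
      (r = 0 ∧ s = 0 ∧ b = 1 ∧ c = 1 ∧ (t = 1 ∨ t = -1)) := by
    interval_cases t <;> interval_cases s <;> interval_cases A <;> interval_cases B <;> omega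
  rcases key with ⟨rfl, rfl, rfl, rfl, rfl | rfl⟩ | ⟨rfl, rfl, rfl, rfl, rfl | rfl⟩
  · exact ⟨x, y, z, by rw [hn]; ring⟩
  · exact ⟨x, y, -z, by rw [hn]; ring⟩
  · exact ⟨z, x, y, by rw [hn]; ring⟩
  · exact ⟨z, x, -y, by rw [hn]; ring⟩

/-- Descent on `a + A`, where `A = 4ab - t²`: the three shears keep `a` and `A` and make `t`, `s` and
the middle coefficient of the binary part small; if the result is not reduced, swapping two
variables lowers `a` (keeping `A`) or lowers `A` (keeping `a`). -/
theorem repT_aux (N : ℕ) : ∀ {a b c r s t : ℤ}, Good n a b c r s t →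
    a + (4 * a * b - t ^ 2) ≤ N → RepT n := by
  induction N with
  | zero =>
    intro a b c r s t h hN
    have := h.a_pos
    have := h.minor_pos
    push_cast at hN
    omega
  | succ N ih =>
    intro a b c r s t h hN
    push_cast at hN
    obtain ⟨k₁, hk₁⟩ := exists_centered (2 * (2 * a * r - s * t)) h.minor_pos
    have g₁ := h.shear_yz k₁
    obtain ⟨k₂, hk₂⟩ := exists_centered t h.a_pos
    have g₂ := g₁.shear_xy k₂
    obtain ⟨k₃, hk₃⟩ := exists_centered (s + t * k₁) h.a_pos
    have g₃ := g₂.shear_xz k₃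
    have hAeq : 4 * a * (b + t * k₂ + a * k₂ ^ 2) - (t + 2 * a * k₂) ^ 2
        = 4 * a * b - t ^ 2 := by ring
    by_cases hab : a ≤ b + t * k₂ + a * k₂ ^ 2
    · by_cases hAC : 4 * a * (b + t * k₂ + a * k₂ ^ 2) - (t + 2 * a * k₂) ^ 2 ≤
        4 * a * (c + r * k₁ + b * k₁ ^ 2 + (s + t * k₁) * k₃ + a * k₃ ^ 2)
          - (s + t * k₁ + 2 * a * k₃) ^ 2
      · refine g₃.repT_of_reduced hab hAC hk₂ hk₃ ?_
        constructor
        · linarith [hk₁.1]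
        · linarith [hk₁.2]
      · exact ih g₃.swap_yz (by linarith [not_le.mp hAC])
    · refine ih g₃.swap_xy ?_
      linarith [not_le.mp hab]

/-- Every number represented by a positive definite ternary form of half-discriminant `3` is
represented by `T`. -/
theorem repT (h : Good n a b c r s t) : RepT n := by
  have := h.a_pos
  have := h.minor_pos
  exact repT_aux (a + (4 * a * b - t ^ 2)).toNat h (by omega)
end Good

/-! ### Numbers represented by `T` -/

open NumberTheorySymbols in
/-- By quadratic reciprocity, `-d` is a square modulo `p`. The equation forces `p ≡ 1 (mod 4)`, and
`pr² ≡ -3 (mod d)` turns `(p/d)` into `(-3/d)`, which is `1` because `d ≡ 1 (mod 12)`. -/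
theorem exists_sq_add {p d n r : ℕ} (hp : p.Prime) (hd : d % 12 = 1) (hr : r = 1 ∨ r = 3)
    (h : 4 * n * d = p * r ^ 2 + 3) : ∃ u b : ℤ, (p : ℤ) * b = d + u ^ 2 := by
  have hp4 : p % 4 = 1 := by
    rcases hr with rfl | rfl <;> rw [mul_assoc] at h <;> omega
  have : Fact p.Prime := ⟨hp⟩
  have hd1 : J(-3 | d) = 1 := by
    have hodd : Odd d := Nat.odd_iff.mpr (by omega)
    have h1 : J(-1 | d) = 1 := by
      rw [jacobiSym.at_neg_one hodd, ZMod.χ₄_nat_one_mod_four (by omega)]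
    have h3 : J(3 | d) = 1 := by
      have := jacobiSym.quadratic_reciprocity_one_mod_four (a := d) (b := 3) (by omega)
        (by decide)
      have h4 : J((d : ℤ) | 3) = 1 := by
        rw [jacobiSym.mod_left' (a₂ := 1) (by push_cast; omega)]
        exact jacobiSym.one_left 3
      rw [this] at h4
      exact_mod_cast h4
    rw [show (-3 : ℤ) = (-1) * 3 by norm_num, jacobiSym.mul_left, h1, h3]; norm_num
  have hrd : Int.gcd r d = 1 := by
    rcases hr with rfl | rfl
    · simp
    · rw [Int.gcd_natCast_natCast]
      exact (Nat.Prime.coprime_iff_not_dvd Nat.prime_three).mpr (by omega)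
  have hpd : J(p | d) = 1 := by
    have h1 : J((p : ℤ) * (r : ℤ) ^ 2 | d) = J(-3 | d) := by
      apply jacobiSym.mod_left'
      have h' : (p : ℤ) * (r : ℤ) ^ 2 = -3 + d * (4 * n) := by
        have : (4 : ℤ) * n * d = p * r ^ 2 + 3 := by exact_mod_cast h
        linarith
      rw [h', Int.add_mul_emod_self_left]
    rwa [jacobiSym.mul_left, jacobiSym.sq_one' hrd, mul_one, hd1] at h1
  have hdp : J(-d | p) = 1 := by
    rw [← neg_one_mul, jacobiSym.mul_left, jacobiSym.at_neg_one (Nat.odd_iff.mpr (by omega)),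
      ZMod.χ₄_nat_one_mod_four hp4, one_mul,
      ← jacobiSym.quadratic_reciprocity_one_mod_four hp4 (Nat.odd_iff.mpr (by omega)), hpd]
  obtain ⟨v, hv⟩ := ZMod.isSquare_of_jacobiSym_eq_one hdp
  obtain ⟨u, rfl⟩ := ZMod.intCast_surjective v
  have hz : ((d + u ^ 2 : ℤ) : ZMod p) = 0 := by
    push_cast at hv ⊢
    linear_combination -hv
  obtain ⟨b, hb⟩ := (ZMod.intCast_zmod_eq_zero_iff_dvd _ p).mp hz
  exact ⟨u, b, hb.symm⟩

/-- The form `p x² + 2u xy + β y² + r yz + n z²` with `pβ - u² = d` has half-discriminant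
`4nd - pr² = 3` and takes the value `n` at `(0, 0, 1)`. -/
theorem repT_of_prime {p d n r : ℕ} (hp : p.Prime) (hd : d % 12 = 1) (hr : r = 1 ∨ r = 3)
    (h : 4 * n * d = p * r ^ 2 + 3) : RepT n := by
  obtain ⟨u, b, hub⟩ := exists_sq_add hp hd hr h
  have h' : (4 : ℤ) * n * d = p * r ^ 2 + 3 := by exact_mod_cast h
  have hd0 : (0 : ℤ) < d := by omega
  have hp0 : (0 : ℤ) < p := by exact_mod_cast hp.pos
  refine Good.repT (a := p) (b := b) (c := n) (r := r) (s := 0) (t := 2 * u)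
    ⟨hp0, by linarith, ?_, 0, 0, 1, by ring⟩
  linear_combination 4 * (n : ℤ) * hub + h'

theorem repT_of_not_three_dvd {n : ℕ} (hn : n % 3 ≠ 0) : RepT n := by
  -- The prime is sought as `p = 4n(12k + 1) - 3`, that is, `p ≡ 4n - 3 (mod 48n)`.
  have hcop : IsCoprime (4 * n - 3 : ℤ) ((48 * n : ℕ) : ℤ) := by
    have h4 : IsCoprime (4 * n - 3 : ℤ) 4 := ⟨1, 1 - n, by ring⟩
    have h3n : IsCoprime (4 * n - 3 : ℤ) 3 ∧ IsCoprime (4 * n - 3 : ℤ) n := by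
      obtain ⟨j, hj⟩ : ∃ j : ℤ, (n : ℤ) = 3 * j + 1 ∨ (n : ℤ) = 3 * j + 2 :=
        ⟨(n : ℤ) / 3, by omega⟩
      rcases hj with hj | hj <;> rw [hj]
      · exact ⟨⟨1, -4 * j, by ring⟩, ⟨j, 1 - 4 * j, by ring⟩⟩
      · exact ⟨⟨-1, 4 * j + 2, by ring⟩, ⟨-(j + 1), 4 * j + 3, by ring⟩⟩
    have := (h4.mul_right h4).mul_right (h3n.1.mul_right h3n.2)
    convert this using 1
    push_cast; ring
  obtain ⟨p, hpn, hp, hmod⟩ :=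
    Nat.forall_exists_prime_gt_and_zmodEq (4 * n) (by omega) hcop
  obtain ⟨k, hk⟩ := hmod.symm.dvd
  push_cast at hk
  have hk0 : 0 ≤ k := by
    by_contra hneg
    nlinarith
  lift k to ℕ using hk0
  refine repT_of_prime (d := 12 * k + 1) (r := 1) hp (by omega) (Or.inl rfl) ?_
  zify
  linarith

theorem repT_three_mul {m : ℕ} (hm : m % 3 = 1) : RepT (3 * m : ℕ) := by
  obtain ⟨j, rfl⟩ : ∃ j, m = 3 * j + 1 := ⟨m / 3, by omega⟩
  -- The prime is sought with `3p = 4m(12k + 1) - 1`, that is, `p ≡ 4j + 1 (mod 16m)`.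
  have hcop : IsCoprime (4 * j + 1 : ℤ) ((16 * (3 * j + 1) : ℕ) : ℤ) := by
    have h4 : IsCoprime (4 * j + 1 : ℤ) 4 := ⟨1, -j, by ring⟩
    have hm : IsCoprime (4 * j + 1 : ℤ) (3 * j + 1) := ⟨-3, 4, by ring⟩
    have := (h4.mul_right h4).mul_right hm
    convert this using 1
    push_cast; ring
  obtain ⟨p, hpn, hp, hmod⟩ :=
    Nat.forall_exists_prime_gt_and_zmodEq (4 * j + 1) (by omega) hcop
  obtain ⟨k, hk⟩ := hmod.symm.dvd
  push_cast at hk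
  have hk0 : 0 ≤ k := by
    by_contra hneg
    nlinarith
  lift k to ℕ using hk0
  refine repT_of_prime (d := 12 * k + 1) (r := 3) hp (by omega) (Or.inr rfl) ?_
  zify
  linarith

theorem RepT.nine_mul {n : ℤ} (h : RepT n) : RepT (9 * n) := by
  obtain ⟨x, z, w, rfl⟩ := h
  exact ⟨3 * x, 3 * z, 3 * w, by ring⟩

/-! ### The quaternary forms -/

/-- `n` is represented by the quaternary form `x² + b y² + (z² + zw + w²)`. -/
def RepQ (b n : ℕ) : Prop :=
  ∃ x y z w : ℤ, (n : ℤ) = x ^ 2 + b * y ^ 2 + (z ^ 2 + z * w + w ^ 2)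

theorem RepT.repQ {b n : ℕ} (y : ℤ) (h : RepT (n - b * y ^ 2)) : RepQ b n := by
  obtain ⟨x, z, w, h⟩ := h
  exact ⟨x, y, z, w, by linarith⟩

theorem RepQ.nine_mul {b n : ℕ} (h : RepQ b n) : RepQ b (9 * n) := by
  obtain ⟨x, y, z, w, h⟩ := h
  exact ⟨3 * x, 3 * y, 3 * z, 3 * w, by push_cast; rw [h]; ring⟩

theorem repQ_of_not_three_dvd {b : ℕ} (hb : b % 3 ≠ 0) (hb5 : b ≤ 5) (n : ℕ) : RepQ b n := by
  by_cases hn : n % 3 = 0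
  · obtain rfl | rfl | h6 : n = 0 ∨ n = 3 ∨ 6 ≤ n := by omega
    · exact ⟨0, 0, 0, 0, by norm_num⟩
    · exact ⟨0, 0, 1, 1, by norm_num⟩
    · have := repT_of_not_three_dvd (n := n - b) (by omega)
      rw [Nat.cast_sub (by omega)] at this
      exact RepT.repQ 1 (by simpa using this)
  · exact RepT.repQ 0 (by simpa using repT_of_not_three_dvd hn)

theorem repQ_three (n : ℕ) : RepQ 3 n := by
  induction n using Nat.strong_induction_on with
  | _ n ih =>
    rcases Nat.eq_zero_or_pos n with rfl | hpos
    · exact ⟨0, 0, 0, 0, by norm_num⟩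
    obtain hn | ⟨l, rfl | rfl | rfl⟩ : n % 3 ≠ 0 ∨
        ∃ l, n = 9 * l ∨ n = 3 * (3 * l + 1) ∨ n = 3 * (3 * l + 1) + 3 := by
      by_cases hn : n % 3 = 0
      · exact Or.inr ⟨n / 9, by omega⟩
      · exact Or.inl hn
    · exact RepT.repQ 0 (by simpa using repT_of_not_three_dvd hn)
    · exact (ih l (by omega)).nine_mul
    · exact RepT.repQ 0 (by simpa using repT_three_mul (m := 3 * l + 1) (by omega))
    · exact RepT.repQ 1 (by simpa using repT_three_mul (m := 3 * l + 1) (by omega))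

theorem repQ_six (n : ℕ) : RepQ 6 n := by
  induction n using Nat.strong_induction_on with
  | _ n ih =>
    rcases Nat.eq_zero_or_pos n with rfl | hpos
    · exact ⟨0, 0, 0, 0, by norm_num⟩
    obtain hn | ⟨l, rfl | rfl | rfl⟩ : n % 3 ≠ 0 ∨
        ∃ l, n = 9 * l ∨ n = 3 * (3 * l + 1) ∨ n = 9 * l + 6 := by
      by_cases hn : n % 3 = 0
      · exact Or.inr ⟨n / 9, by omega⟩
      · exact Or.inl hn
    · exact RepT.repQ 0 (by simpa using repT_of_not_three_dvd hn)
    · exact (ih l (by omega)).nine_mul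
    · exact RepT.repQ 0 (by simpa using repT_three_mul (m := 3 * l + 1) (by omega))
    -- Subtracting `6 · 1²` leaves `9l`; if `3 ∣ l`, subtracting `6 · 2²` leaves `9(l - 2)` instead.
    · by_cases hl : l % 3 = 0
      · obtain rfl | h3 : l = 0 ∨ 2 ≤ l := by omega
        · exact ⟨0, 1, 0, 0, by norm_num⟩
        · obtain ⟨k, rfl⟩ := Nat.exists_eq_add_of_le' h3
          have := (repT_of_not_three_dvd (n := k) (by omega)).nine_mul
          refine RepT.repQ 2 ?_
          convert this using 1
          push_cast; ring
      · exact RepT.repQ 1 (by simpa using (repT_of_not_three_dvd hl).nine_mul)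

/-- If `b ≥ 7`, a representation of `6` has `y = 0`, but `T` does not represent `6`. -/
theorem le_six_of_repQ {b : ℕ} (h : RepQ b 6) : b ≤ 6 := by
  by_contra hb
  obtain ⟨x, y, z, w, h⟩ := h
  push_cast at h
  have hb' : (7 : ℤ) ≤ b := by omega
  have hN : 0 ≤ z ^ 2 + z * w + w ^ 2 := by nlinarith [sq_nonneg (z + w), sq_nonneg z, sq_nonneg w]
  have hy : y = 0 := by
    by_contra hy
    have : 0 < y ^ 2 := by positivity
    nlinarith [sq_nonneg x]
  subst hy
  have hx : x ^ 2 ≤ 6 := by nlinarith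
  have hz : z ^ 2 ≤ 8 := by nlinarith [sq_nonneg (z + 2 * w), sq_nonneg x]
  have hw : w ^ 2 ≤ 8 := by nlinarith [sq_nonneg (2 * z + w), sq_nonneg x]
  have hx1 : -2 ≤ x := by nlinarith
  have hx2 : x ≤ 2 := by nlinarith
  have hz1 : -2 ≤ z := by nlinarith
  have hz2 : z ≤ 2 := by nlinarith
  have hw1 : -2 ≤ w := by nlinarith
  have hw2 : w ≤ 2 := by nlinarith
  interval_cases x <;> interval_cases z <;> interval_cases w <;> omega

theorem stmt_4 (b : ℕ) (hb : 0 < b) :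
    (∀ n : ℕ, ∃ x y z w : ℤ,
      (n : ℤ) = x ^ 2 + b * y ^ 2 + (z ^ 2 + z * w + w ^ 2)) ↔
    b ∈ ({1, 2, 3, 4, 5, 6} : Set ℕ) := by
  constructor
  · intro h
    have h6 : b ≤ 6 := le_six_of_repQ (h 6)
    simp only [Set.mem_insert_iff, Set.mem_singleton_iff]
    omega
  · intro h n
    change RepQ b n
    simp only [Set.mem_insert_iff, Set.mem_singleton_iff] at h
    rcases h with rfl | rfl | rfl | rfl | rfl | rfl
    · exact repQ_of_not_three_dvd (by norm_num) (by norm_num) n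
    · exact repQ_of_not_three_dvd (by norm_num) (by norm_num) n
    · exact repQ_three n
    · exact repQ_of_not_three_dvd (by norm_num) (by norm_num) n
    · exact repQ_of_not_three_dvd (by norm_num) (by norm_num) n
    · exact repQ_six n
end

section
/- A nonnegative integer n can be written as 2·x² + (y² + y·z + z²) with x, y, z ∈ ℤ if and only if n is not of the form 4^k·(16·l + 10) for nonnegative integers k and l. -/
/-!
The map `(t, u, v) ↦ (2t + 2u + v, 2t - u + v, 2t - u - 2v)` satisfies
`6 (2t² + u² + uv + v²) = a² + b² + c²`, and every triple `(a, b, c)` with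
`a² + b² + c² ≡ 0 (mod 6)` lies in its image after changing signs. Hence `n` is represented by
`2x² + y² + yz + z²` exactly when `6n` is a sum of three squares (`represented_iff`), and
`n = 4^k (16l + 10)` corresponds to `6n = 4^(k+1) (8(3l + 1) + 7)`, which are the multiples of `6`
among the exceptions `4^k (8l + 7)` of the Legendre–Gauss three-square theorem.

The three-square theorem is proved along Dirichlet's lines. Hermite reduction shows that every
positive definite integral ternary form of determinant `1` is a sum of three squares of integral
linear forms (`IsUnimodular.sumsOfSquares`). If `-d` is a square modulo `d n - 1`, then `n` is a
value of such a form (`sum_three_squares_of_dvd`). A suitable `d` is found with Dirichlet's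
theorem on primes in arithmetic progressions, choosing `d n - 1` to be a prime or twice a prime,
and quadratic reciprocity for the Jacobi symbol.
-/

/-! ### Reduction of ternary forms of determinant one -/

/-- The form `a x² + b y² + c z² + 2p yz + 2q xz + 2r xy` is positive definite of determinant `1`.
Positivity of the first two leading minors suffices, the third one being the determinant. -/
def IsUnimodular (a b c p q r : ℤ) : Prop :=
  0 < a ∧ 0 < a * b - r ^ 2 ∧
    a * b * c + 2 * p * q * r - a * p ^ 2 - b * q ^ 2 - c * r ^ 2 = 1

/-- Every value of the form `a x² + b y² + c z² + 2p yz + 2q xz + 2r xy` at an integral point is a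
sum of three squares. -/
def SumsOfSquares (a b c p q r : ℤ) : Prop :=
  ∀ x y z : ℤ, ∃ s t u : ℤ,
    a * x ^ 2 + b * y ^ 2 + c * z ^ 2 + 2 * p * (y * z) + 2 * q * (x * z) + 2 * r * (x * y) =
      s ^ 2 + t ^ 2 + u ^ 2

lemma exists_shift_abs_le (a r : ℤ) (ha : 0 < a) :
    ∃ k : ℤ, -a ≤ 2 * (r + a * k) ∧ 2 * (r + a * k) ≤ a := by
  refine ⟨-((2 * r + a) / (2 * a)), ?_⟩
  have h1 := Int.emod_add_mul_ediv (2 * r + a) (2 * a)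
  have h2 := Int.emod_nonneg (2 * r + a) (by omega : 2 * a ≠ 0)
  have h3 := Int.emod_lt_of_pos (2 * r + a) (by omega : 0 < 2 * a)
  constructor <;> nlinarith

/-- The only form that is reduced in the sense of the inequalities below is, up to the shift
`x ↦ x + q z`, the form `x² + y² + z²`: Hermite's inequalities `3a² ≤ 4A` and `3A² ≤ 4a` for
`A = ab - r²` force `a = A = 1`. -/
lemma IsUnimodular.sumsOfSquares_of_reduced {a b c p q r : ℤ} (h : IsUnimodular a b c p q r)
    (hr : -a ≤ 2 * r) (hr' : 2 * r ≤ a)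
    (hP : -(a * b - r ^ 2) ≤ 2 * (a * p - r * q)) (hP' : 2 * (a * p - r * q) ≤ a * b - r ^ 2)
    (hab : a ≤ b) (hAC : a * b - r ^ 2 ≤ a * c - q ^ 2) :
    SumsOfSquares a b c p q r := by
  obtain ⟨ha, hA, hdet⟩ := h
  have key : (a * b - r ^ 2) * (a * c - q ^ 2) - (a * p - r * q) ^ 2 = a := by
    linear_combination a * hdet
  generalize hAdef : a * b - r ^ 2 = A at *
  generalize hCdef : a * c - q ^ 2 = C at *
  generalize hPdef : a * p - r * q = P at *
  have h1 : 3 * a ^ 2 ≤ 4 * A := by nlinarith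
  have h2 : 3 * A ^ 2 ≤ 4 * a := by nlinarith
  have h3 : a ≤ 1 := by
    by_contra hlt
    have : 2 ≤ a := by omega
    have : A ≤ a := by nlinarith
    nlinarith
  obtain rfl : a = 1 := by omega
  obtain rfl : A = 1 := by nlinarith
  obtain rfl : r = 0 := by omega
  obtain rfl : P = 0 := by omega
  obtain rfl : p = 0 := by linarith
  obtain rfl : b = 1 := by linarith
  intro x y z
  exact ⟨x + q * z, y, z, by linear_combination (z ^ 2) * (hCdef + key)⟩

lemma SumsOfSquares.of_shift_x {a b c p q r : ℤ} (k : ℤ)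
    (h : SumsOfSquares a (b + 2 * k * r + k ^ 2 * a) c (p + k * q) q (r + a * k)) :
    SumsOfSquares a b c p q r := by
  intro x y z
  obtain ⟨s, t, u, e⟩ := h (x - k * y) y z
  exact ⟨s, t, u, by rw [← e]; ring⟩

lemma SumsOfSquares.of_shift_y {a b c p q r : ℤ} (k : ℤ)
    (h : SumsOfSquares a b (c + 2 * k * p + k ^ 2 * b) (p + k * b) (q + k * r) r) :
    SumsOfSquares a b c p q r := by
  intro x y z
  obtain ⟨s, t, u, e⟩ := h x (y - k * z) z
  exact ⟨s, t, u, by rw [← e]; ring⟩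

lemma SumsOfSquares.of_swap_xy {a b c p q r : ℤ} (h : SumsOfSquares b a c q p r) :
    SumsOfSquares a b c p q r := by
  intro x y z
  obtain ⟨s, t, u, e⟩ := h y x z
  exact ⟨s, t, u, by rw [← e]; ring⟩

lemma SumsOfSquares.of_swap_yz {a b c p q r : ℤ} (h : SumsOfSquares a c b p r q) :
    SumsOfSquares a b c p q r := by
  intro x y z
  obtain ⟨s, t, u, e⟩ := h x z y
  exact ⟨s, t, u, by rw [← e]; ring⟩

/-- Hermite reduction, by lexicographic induction on `(a, ab - r²)`: two shifts make `r` small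
relative to `a` and `ap - rq` small relative to `ab - r²` without changing the pair, after which
either a swap of variables lowers the pair or the form is reduced. -/
theorem IsUnimodular.sumsOfSquares {a b c p q r : ℤ} (h : IsUnimodular a b c p q r) :
    SumsOfSquares a b c p q r := by
  obtain ⟨m, hm⟩ : ∃ m : ℕ, a.toNat = m := ⟨_, rfl⟩
  induction m using Nat.strong_induction_on generalizing a b c p q r with
  | _ m ihm =>
  obtain ⟨M, hM⟩ : ∃ M : ℕ, (a * b - r ^ 2).toNat = M := ⟨_, rfl⟩
  induction M using Nat.strong_induction_on generalizing b c p q r with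
  | _ M ihM =>
  obtain ⟨ha, hA, hdet⟩ := h
  obtain ⟨k, hk⟩ := exists_shift_abs_le (a * b - r ^ 2) (a * p - r * q) hA
  obtain ⟨l, hl⟩ := exists_shift_abs_le a r ha
  apply SumsOfSquares.of_shift_y k
  apply SumsOfSquares.of_shift_x l
  have eA : a * (b + 2 * l * r + l ^ 2 * a) - (r + a * l) ^ 2 = a * b - r ^ 2 := by ring
  have eP : a * (p + k * b + l * (q + k * r)) - (r + a * l) * (q + k * r) =
      a * p - r * q + (a * b - r ^ 2) * k := by ring
  have hdet' : a * (b + 2 * l * r + l ^ 2 * a) * (c + 2 * k * p + k ^ 2 * b) +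
      2 * (p + k * b + l * (q + k * r)) * (q + k * r) * (r + a * l) -
      a * (p + k * b + l * (q + k * r)) ^ 2 - (b + 2 * l * r + l ^ 2 * a) * (q + k * r) ^ 2 -
      (c + 2 * k * p + k ^ 2 * b) * (r + a * l) ^ 2 = 1 := by
    rw [← hdet]; ring
  rw [← eP, ← eA] at hk
  rw [← eA] at hA hM
  clear eA eP hdet
  generalize b + 2 * l * r + l ^ 2 * a = b' at *
  generalize c + 2 * k * p + k ^ 2 * b = c' at *
  generalize p + k * b + l * (q + k * r) = p' at *
  generalize q + k * r = q' at *
  generalize r + a * l = r' at *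
  have key : (a * b' - r' ^ 2) * (a * c' - q' ^ 2) - (a * p' - r' * q') ^ 2 = a := by
    linear_combination a * hdet'
  by_cases hab : a ≤ b'
  · by_cases hAC : a * b' - r' ^ 2 ≤ a * c' - q' ^ 2
    · exact IsUnimodular.sumsOfSquares_of_reduced ⟨ha, hA, hdet'⟩ hl.1 hl.2 hk.1 hk.2 hab hAC
    · have hC : 0 < a * c' - q' ^ 2 :=
        pos_of_mul_pos_right (a := a * b' - r' ^ 2)
          (by nlinarith [sq_nonneg (a * p' - r' * q')]) hA.le
      apply SumsOfSquares.of_swap_yz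
      exact ihM _ (by omega) ⟨ha, hC, by rw [← hdet']; ring⟩ rfl
  · have hb : 0 < b' :=
      pos_of_mul_pos_right (a := a) (by nlinarith [sq_nonneg r']) ha.le
    apply SumsOfSquares.of_swap_xy
    exact ihm _ (by omega) ⟨hb, by linarith, by rw [← hdet']; ring⟩ rfl

/-! ### The three-square theorem -/

/-- The form with coefficients `a = (r² + d) / (dn - 1)`, `b = dn - 1`, `c = n`, `p = 0`, `q = 1`
has determinant `1` and takes the value `n` at `(0, 0, 1)`. -/
lemma sum_three_squares_of_dvd (n d r : ℤ) (hd : 0 < d) (hpos : 0 < d * n - 1)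
    (hdvd : d * n - 1 ∣ r ^ 2 + d) : ∃ x y z : ℤ, n = x ^ 2 + y ^ 2 + z ^ 2 := by
  obtain ⟨a, ha⟩ := hdvd
  have ha0 : 0 < a := pos_of_mul_pos_right (a := d * n - 1) (by nlinarith [sq_nonneg r]) hpos.le
  have h : IsUnimodular a (d * n - 1) n 0 1 r :=
    ⟨ha0, by linarith, by linear_combination -n * ha⟩
  obtain ⟨s, t, u, e⟩ := h.sumsOfSquares 0 0 1
  exact ⟨s, t, u, by linear_combination e⟩

lemma exists_dvd_sq_add_of_jacobiSym {p : ℕ} (hp : p.Prime) {d : ℤ}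
    (h : jacobiSym (-d) p = 1) : ∃ r : ℤ, (p : ℤ) ∣ r ^ 2 + d := by
  have : Fact p.Prime := ⟨hp⟩
  obtain ⟨s, hs⟩ := ZMod.isSquare_of_jacobiSym_eq_one h
  refine ⟨s.val, ?_⟩
  rw [← ZMod.intCast_zmod_eq_zero_iff_dvd]
  push_cast at hs ⊢
  rw [ZMod.natCast_zmod_val]
  linear_combination -hs

/-- The case `n ≡ 2 (mod 4)`: take `d = 4j + 1` such that `d n - 1 = 4nj + (n - 1)` is prime. -/
lemma sum_three_squares_of_two_mod_four (n : ℕ) (hn : n % 4 = 2) :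
    ∃ x y z : ℤ, (n : ℤ) = x ^ 2 + y ^ 2 + z ^ 2 := by
  have hcop : (n - 1).Coprime (4 * n) := by
    apply Nat.Coprime.mul_right
    · have : (n - 1).Coprime (2 ^ 2) :=
        Nat.Coprime.pow_right 2 (Nat.coprime_two_right.2 (Nat.odd_iff.2 (by omega)))
      simpa using this
    · have := Nat.coprime_self_add_right (m := n - 1) (n := 1)
      rw [show n - 1 + 1 = n by omega] at this
      exact this.2 (Nat.coprime_one_right _)
  obtain ⟨p, hpn, hp, hmod⟩ := Nat.forall_exists_prime_gt_and_modEq n (by omega) hcop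
  obtain ⟨j, hj⟩ := (Nat.modEq_iff_dvd' (by omega)).1 hmod.symm
  have hdp : ((4 * j + 1 : ℕ) : ℤ) * n - 1 = p := by
    have : p = 4 * n * j + (n - 1) := by omega
    zify [(by omega : 1 ≤ n)] at this
    push_cast
    linarith
  have hp4 : p % 4 = 1 := by
    have : p = 4 * (n * j) + (n - 1) := by rw [← mul_assoc]; omega
    omega
  have hJ : jacobiSym (-((4 * j + 1 : ℕ) : ℤ)) p = 1 := by
    have hdodd : Odd (4 * j + 1) := Nat.odd_iff.2 (by omega)
    rw [neg_eq_neg_one_mul, jacobiSym.mul_left, jacobiSym.at_neg_one (Nat.odd_iff.2 (by omega)),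
      ZMod.χ₄_nat_one_mod_four hp4, one_mul,
      jacobiSym.quadratic_reciprocity_one_mod_four' hdodd hp4]
    have : jacobiSym (p : ℤ) (4 * j + 1) = jacobiSym (-1) (4 * j + 1) := by
      apply jacobiSym.mod_left'
      rw [← hdp, sub_eq_add_neg, Int.mul_add_emod_self_left]
    rw [this, jacobiSym.at_neg_one hdodd, ZMod.χ₄_nat_one_mod_four (by omega)]
  obtain ⟨r, hr⟩ := exists_dvd_sq_add_of_jacobiSym hp hJ
  refine sum_three_squares_of_dvd n (4 * j + 1 : ℕ) r (by positivity) ?_ ?_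
  · rw [hdp]; exact_mod_cast hp.pos
  · rw [hdp]; exact hr

/-- If `d n - 1 = 2p` with `d ≡ 1, 3 (mod 8)`, and `p`, `d` are such that quadratic reciprocity gives
`(-d/p) = (p/d)`, then this symbol equals `(p/d)(-2/d) = (-2p/d) = (1/d) = 1`. -/
lemma sum_three_squares_of_two_mul_prime (n d p : ℕ) (hp : p.Prime)
    (hd : d % 8 = 1 ∨ d % 8 = 3) (hp2 : p % 2 = 1) (hpd : p % 4 = 1 ∨ d % 4 = 3)
    (h : d * n = 2 * p + 1) :
    ∃ x y z : ℤ, (n : ℤ) = x ^ 2 + y ^ 2 + z ^ 2 := by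
  have hdodd : Odd d := Nat.odd_iff.2 (by omega)
  have hpodd : Odd p := Nat.odd_iff.2 hp2
  have hz : (d : ℤ) * n - 1 = 2 * p := by
    have : (d : ℤ) * n = 2 * p + 1 := by exact_mod_cast h
    linarith
  have hrec : jacobiSym (-(d : ℤ)) p = jacobiSym p d := by
    rw [neg_eq_neg_one_mul, jacobiSym.mul_left, jacobiSym.at_neg_one hpodd]
    by_cases hp4 : p % 4 = 1
    · rw [ZMod.χ₄_nat_one_mod_four hp4, one_mul,
        jacobiSym.quadratic_reciprocity_one_mod_four' hdodd hp4]
    · have hp4' : p % 4 = 3 := by omega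
      rw [ZMod.χ₄_nat_three_mod_four hp4',
        jacobiSym.quadratic_reciprocity_three_mod_four (by omega) hp4']
      ring
  have hneg2 : jacobiSym (-2) d = 1 := by
    rw [jacobiSym.at_neg_two hdodd, ZMod.χ₈'_nat_eq_if_mod_eight]
    rw [if_neg (by omega), if_pos hd]
  have hJ : jacobiSym (-(d : ℤ)) p = 1 := by
    rw [hrec, ← one_mul (jacobiSym (p : ℤ) d), ← hneg2, ← jacobiSym.mul_left, hneg2,
      ← jacobiSym.one_left d]
    apply jacobiSym.mod_left'
    rw [show (-2 : ℤ) * p = 1 + d * (-n) by linear_combination hz, Int.add_mul_emod_self_left]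
  obtain ⟨r, hr⟩ := exists_dvd_sq_add_of_jacobiSym hp hJ
  -- One of `r`, `r + p` is odd, which makes `r² + d` even as well.
  obtain ⟨r', hr', hodd⟩ : ∃ r' : ℤ, (p : ℤ) ∣ r' ^ 2 + d ∧ Odd r' := by
    rcases Int.even_or_odd r with he | ho
    · refine ⟨r + p, ?_, he.add_odd (by exact_mod_cast hpodd)⟩
      rw [show (r + p) ^ 2 + (d : ℤ) = r ^ 2 + d + p * (2 * r + p) by ring]
      exact dvd_add hr (dvd_mul_right _ _)
    · exact ⟨r, hr, ho⟩
  refine sum_three_squares_of_dvd n d r' (by exact_mod_cast hdodd.pos) ?_ ?_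
  · rw [hz]
    have := hp.pos
    positivity
  · rw [hz]
    refine IsCoprime.mul_dvd ?_ ?_ hr'
    · exact_mod_cast Nat.isCoprime_iff_coprime.2 (Nat.coprime_two_left.2 hpodd)
    · exact (hodd.pow.add_odd (by exact_mod_cast hdodd)).two_dvd

/-- The case of odd `n ≢ 7 (mod 8)`: take `d = 8j + c` with `c` equal to `1` or `3`, such that
`(d n - 1) / 2 = 4nj + (cn - 1) / 2` is prime. -/
lemma sum_three_squares_of_odd (n c : ℕ) (h : c = 1 ∧ n % 8 = 3 ∨ c = 3 ∧ n % 4 = 1) :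
    ∃ x y z : ℤ, (n : ℤ) = x ^ 2 + y ^ 2 + z ^ 2 := by
  obtain ⟨e, he⟩ : ∃ e, c * n = 2 * e + 1 := ⟨(c * n - 1) / 2, by
    rcases h with ⟨rfl, h⟩ | ⟨rfl, h⟩ <;> omega⟩
  have hodd : e % 2 = 1 := by rcases h with ⟨rfl, h⟩ | ⟨rfl, h⟩ <;> omega
  have hcop : e.Coprime (4 * n) := by
    apply Nat.Coprime.mul_right
    · have : e.Coprime (2 ^ 2) :=
        Nat.Coprime.pow_right 2 (Nat.coprime_two_right.2 (Nat.odd_iff.2 hodd))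
      simpa using this
    · have : e.Coprime (c * n) := by
        rw [he, mul_comm 2 e]
        simp
      exact this.coprime_dvd_right (dvd_mul_left _ _)
  obtain ⟨p, hpn, hp, hmod⟩ := Nat.forall_exists_prime_gt_and_modEq e (by omega) hcop
  obtain ⟨j, hj⟩ := (Nat.modEq_iff_dvd' (by omega)).1 hmod.symm
  have hp' : p = 4 * (n * j) + e := by rw [← mul_assoc]; omega
  refine sum_three_squares_of_two_mul_prime n (8 * j + c) p hp ?_ ?_ ?_ ?_
  · omega
  · omega
  · rcases h with ⟨rfl, h⟩ | ⟨rfl, h⟩ <;> omega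
  · rw [hp']; linear_combination he

/-- The sufficiency half of the Legendre–Gauss three-square theorem. -/
theorem sum_three_squares (n : ℕ) (h : ¬ ∃ k l : ℕ, n = 4 ^ k * (8 * l + 7)) :
    ∃ x y z : ℤ, (n : ℤ) = x ^ 2 + y ^ 2 + z ^ 2 := by
  induction n using Nat.strong_induction_on with
  | _ n ih =>
  rcases Nat.eq_zero_or_pos n with rfl | hn
  · exact ⟨0, 0, 0, by simp⟩
  by_cases h4 : n % 4 = 0
  · obtain ⟨m, rfl⟩ := Nat.dvd_of_mod_eq_zero h4
    obtain ⟨x, y, z, e⟩ := ih m (by omega) (by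
      rintro ⟨k, l, rfl⟩
      exact h ⟨k + 1, l, by ring⟩)
    exact ⟨2 * x, 2 * y, 2 * z, by push_cast; rw [e]; ring⟩
  · have h7 : n % 8 ≠ 7 := fun h7 => h ⟨0, n / 8, by omega⟩
    by_cases h2 : n % 4 = 2
    · exact sum_three_squares_of_two_mod_four n h2
    by_cases h3 : n % 8 = 3
    · exact sum_three_squares_of_odd n 1 (by omega)
    · exact sum_three_squares_of_odd n 3 (by omega)

lemma sq_emod_eight (x : ℤ) : x ^ 2 % 8 = 0 ∨ x ^ 2 % 8 = 1 ∨ x ^ 2 % 8 = 4 := by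
  have : x % 8 = 0 ∨ x % 8 = 1 ∨ x % 8 = 2 ∨ x % 8 = 3 ∨ x % 8 = 4 ∨ x % 8 = 5 ∨ x % 8 = 6 ∨
    x % 8 = 7 := by omega
  rcases this with h | h | h | h | h | h | h | h <;> simp [pow_two, Int.mul_emod, h]

lemma even_of_sq_emod_four {x : ℤ} (h : x ^ 2 % 4 ≠ 1) : ∃ y, x = 2 * y := by
  refine (Int.even_or_odd x).elim (fun ⟨y, hy⟩ => ⟨y, by omega⟩) fun ⟨y, hy⟩ => ?_
  exact absurd (by rw [hy]; ring_nf; omega) h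

/-- The necessity half of the Legendre–Gauss three-square theorem. -/
theorem ne_sum_three_squares (k l : ℕ) (x y z : ℤ) :
    (4 : ℤ) ^ k * (8 * l + 7) ≠ x ^ 2 + y ^ 2 + z ^ 2 := by
  induction k generalizing x y z with
  | zero =>
    have hx := sq_emod_eight x
    have hy := sq_emod_eight y
    have hz := sq_emod_eight z
    omega
  | succ k ih =>
    intro e
    have hx := sq_emod_eight x
    have hy := sq_emod_eight y
    have hz := sq_emod_eight z
    rw [pow_succ', mul_assoc] at e
    obtain ⟨x, rfl⟩ := even_of_sq_emod_four (x := x) (by omega)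
    obtain ⟨y, rfl⟩ := even_of_sq_emod_four (x := y) (by omega)
    obtain ⟨z, rfl⟩ := even_of_sq_emod_four (x := z) (by omega)
    exact ih x y z (by linarith)

/-! ### Passing between the two forms -/

lemma sq_emod_three (x : ℤ) : x % 3 = 0 ∧ x ^ 2 % 3 = 0 ∨ x % 3 = 1 ∧ x ^ 2 % 3 = 1 ∨
    x % 3 = 2 ∧ x ^ 2 % 3 = 1 := by
  have : x % 3 = 0 ∨ x % 3 = 1 ∨ x % 3 = 2 := by omega
  rcases this with h | h | h <;> simp [pow_two, Int.mul_emod, h]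

/-- When `3 ∣ a² + b² + c²`, signs can be chosen with `a ≡ b ≡ c (mod 3)`. -/
lemma exists_congr_mod_three {a b c : ℤ} (h : (a ^ 2 + b ^ 2 + c ^ 2) % 3 = 0) :
    ∃ b' c' : ℤ, b' ^ 2 = b ^ 2 ∧ c' ^ 2 = c ^ 2 ∧ (a - b') % 3 = 0 ∧ (b' - c') % 3 = 0 := by
  have ha := sq_emod_three a
  have hb := sq_emod_three b
  have hc := sq_emod_three c
  have hb' : ∃ b' : ℤ, b' ^ 2 = b ^ 2 ∧ (a - b') % 3 = 0 := by
    by_cases h1 : (a - b) % 3 = 0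
    · exact ⟨b, rfl, h1⟩
    · exact ⟨-b, by ring, by omega⟩
  have hc' : ∃ c' : ℤ, c' ^ 2 = c ^ 2 ∧ (a - c') % 3 = 0 := by
    by_cases h1 : (a - c) % 3 = 0
    · exact ⟨c, rfl, h1⟩
    · exact ⟨-c, by ring, by omega⟩
  obtain ⟨b', hb1, hb2⟩ := hb'
  obtain ⟨c', hc1, hc2⟩ := hc'
  exact ⟨b', c', hb1, hc1, hb2, by omega⟩

theorem represented_iff (n : ℤ) :
    (∃ x y z : ℤ, n = 2 * x ^ 2 + (y ^ 2 + y * z + z ^ 2)) ↔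
      ∃ a b c : ℤ, 6 * n = a ^ 2 + b ^ 2 + c ^ 2 := by
  constructor
  · rintro ⟨t, u, v, rfl⟩
    exact ⟨2 * t + 2 * u + v, 2 * t - u + v, 2 * t - u - 2 * v, by ring⟩
  · rintro ⟨a, b, c, h⟩
    obtain ⟨b', c', hb, hc, h1, h2⟩ := exists_congr_mod_three (a := a) (b := b) (c := c) (by omega)
    rw [← hb, ← hc] at h
    have hpar : ∀ x : ℤ, x ^ 2 % 2 = x % 2 := fun x => by
      rcases Int.emod_two_eq_zero_or_one x with h | h <;> simp [pow_two, Int.mul_emod, h]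
    have ha2 := hpar a
    have hb2 := hpar b'
    have hc2 := hpar c'
    obtain ⟨u, hu⟩ := Int.dvd_of_emod_eq_zero h1
    obtain ⟨v, hv⟩ := Int.dvd_of_emod_eq_zero h2
    obtain ⟨t, ht⟩ : ∃ t, a + b' + c' = 6 * t := ⟨(a + b' + c') / 6, by omega⟩
    refine ⟨t, u, v, ?_⟩
    obtain rfl : a = 2 * t + 2 * u + v := by linarith
    obtain rfl : b' = 2 * t - u + v := by linarith
    obtain rfl : c' = 2 * t - u - 2 * v := by linarith
    linarith

theorem stmt_5 (n : ℕ) :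
    (∃ x y z : ℤ, (n : ℤ) = 2 * x ^ 2 + (y ^ 2 + y * z + z ^ 2)) ↔
    ¬ ∃ k l : ℕ, n = 4 ^ k * (16 * l + 10) := by
  rw [represented_iff]
  constructor
  · rintro ⟨a, b, c, h⟩ ⟨k, l, rfl⟩
    apply ne_sum_three_squares (k + 1) (3 * l + 1) a b c
    rw [← h]
    push_cast
    ring
  · intro h
    have := sum_three_squares (6 * n) ?_
    · simpa using this
    rintro ⟨k, l, e⟩
    -- As `6n` is even, `k` is positive; cancelling `12` exhibits `n` as an exception.
    rcases k with _ | k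
    · omega
    · have h3 : 3 ∣ 8 * l + 7 := by
        have : 3 ∣ 4 ^ (k + 1) * (8 * l + 7) := e ▸ ⟨2 * n, by ring⟩
        exact (Nat.Coprime.dvd_mul_left (Nat.Coprime.pow_right _ (by norm_num))).1 this
      refine h ⟨k, l / 3, ?_⟩
      obtain ⟨m, rfl⟩ : ∃ m, l = 3 * m + 1 := ⟨l / 3, by omega⟩
      rw [show (3 * m + 1) / 3 = m by omega]
      have : 6 * n = 6 * (4 ^ k * (16 * m + 10)) := by rw [e]; ring
      omega
end
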